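/- Let -1/2 < s₀ ≤ 0, let p ≥ 2 be real, and let s satisfy max(-1/2, -1/6 - s₀ - 1/p) < s ≤ 0. Then there exists b₂ > 1/2 such that for every b with 1/2 < b < b₂ there is a constant C > 0 with the following property: for every sequence a : ℤ → ℂ with ∑_{m∈ℤ} ⟨m⟩^{s₀p} |a_m|^p < ∞, every k ∈ ℤ and every τ ∈ ℝ, one has ∑_{(n,m)∈ℤ²} ⟨n⟩^{2s} ⟨n+m⟩^{-2s} |a_m|² ⟨-τ + (n+k)² + n²⟩^{-2(1-b)} ⟨τ - (n+k)² + m² + (n+m)²⟩^{-2b} ≤ C (∑_{m∈ℤ} ⟨m⟩^{s₀p} |a_m|^p)^{2/p}. -/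

import Mathlib

/-- The Japanese bracket `⟨x⟩ = (1 + x²)^{1/2}`. -/
noncomputable def jb (x : ℝ) : ℝ := Real.sqrt (1 + x ^ 2)

lemma one_le_jb (x : ℝ) : 1 ≤ jb x := by
  unfold jb; exact Real.one_le_sqrt.mpr (by nlinarith [sq_nonneg x])

lemma jb_pos (x : ℝ) : 0 < jb x := lt_of_lt_of_le one_pos (one_le_jb x)

lemma jb_sq (x : ℝ) : jb x ^ 2 = 1 + x ^ 2 := by
  unfold jb; exact Real.sq_sqrt (by positivity)

lemma abs_le_jb (x : ℝ) : |x| ≤ jb x := by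
  refine abs_le_of_sq_le_sq ?_ (jb_pos x).le
  rw [jb_sq]; linarith

lemma jb_rpow_two (x r : ℝ) : jb x ^ (2 * r) = (1 + x ^ 2) ^ r := by
  rw [Real.rpow_mul (jb_pos x).le, ← jb_sq x]; norm_num

/-- If `x ≤ c y` then `y ^ (-r) ≤ c ^ r x ^ (-r)`. -/
lemma rpow_neg_le_aux {x y c r : ℝ} (hx : 0 < x) (hy : 0 < y) (hc : 0 < c) (hr : 0 ≤ r)
    (h : x ≤ c * y) : y ^ (-r) ≤ c ^ r * x ^ (-r) := by
  have h1 : (c * y) ^ (-r) ≤ x ^ (-r) := Real.rpow_le_rpow_of_nonpos hx h (by linarith)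
  rw [Real.mul_rpow hc.le hy.le] at h1
  have h2 : c ^ r * c ^ (-r) = 1 := by
    rw [← Real.rpow_add hc]; simp
  have h3 : 0 < c ^ r := Real.rpow_pos_of_pos hc r
  calc y ^ (-r) = c ^ r * (c ^ (-r) * y ^ (-r)) := by rw [← mul_assoc, h2, one_mul]
    _ ≤ _ := by gcongr

lemma summable_jb (γ : ℝ) (hγ : 1 < γ) : Summable (fun n : ℤ => jb (n : ℝ) ^ (-γ)) := by
  have h := Real.summable_abs_int_rpow hγ
  refine Summable.of_norm_bounded_eventually h ?_
  have : ∀ᶠ n : ℤ in Filter.cofinite, n ≠ 0 :=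
    (Set.finite_singleton (0 : ℤ)).compl_mem_cofinite
  filter_upwards [this] with n hn
  rw [Real.norm_of_nonneg (Real.rpow_nonneg (jb_pos _).le _)]
  have : 0 < |(n : ℝ)| := by
    rw [abs_pos]; exact_mod_cast hn
  exact Real.rpow_le_rpow_of_nonpos this (abs_le_jb _) (by linarith)

lemma sum_shift (γ : ℝ) (hγ : 1 < γ) :
    ∃ C : ℝ, 0 < C ∧ ∀ (y : ℝ) (S : Finset ℤ), ∑ j ∈ S, jb (y + (j : ℝ)) ^ (-γ) ≤ C := by
  have hs := summable_jb γ hγ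
  have h0 : 0 ≤ ∑' n : ℤ, jb (n : ℝ) ^ (-γ) :=
    tsum_nonneg fun n => Real.rpow_nonneg (jb_pos _).le _
  refine ⟨3 ^ γ * (∑' n : ℤ, jb (n : ℝ) ^ (-γ)) + 1, by positivity, fun y S => ?_⟩
  have h1 : ∀ j ∈ S, jb (y + (j : ℝ)) ^ (-γ) ≤ 3 ^ γ * jb ((⌊y⌋ + j : ℤ) : ℝ) ^ (-γ) := by
    intro j _
    apply rpow_neg_le_aux (jb_pos _) (jb_pos _) (by norm_num) (by linarith)
    apply abs_le_of_sq_le_sq' _ (by have := jb_pos (y + j); positivity) |>.2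
    rw [mul_pow, jb_sq, jb_sq]
    push_cast
    have e1 := Int.floor_le y
    have e2 := Int.lt_floor_add_one y
    nlinarith [sq_nonneg ((⌊y⌋ : ℝ) + j + 2 * (y - ⌊y⌋)), sq_nonneg (y + j + (y - ⌊y⌋)),
      sq_nonneg (y + j - (y - ⌊y⌋))]
  have h2 : ∑ j ∈ S, jb ((⌊y⌋ + j : ℤ) : ℝ) ^ (-γ) ≤ ∑' n : ℤ, jb (n : ℝ) ^ (-γ) := by
    have := Finset.sum_map S (addLeftEmbedding ⌊y⌋) (fun n : ℤ => jb (n : ℝ) ^ (-γ))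
    simp only [addLeftEmbedding_apply] at this
    rw [← this]
    exact hs.sum_le_tsum _ fun n _ => Real.rpow_nonneg (jb_pos _).le _
  calc _ ≤ ∑ j ∈ S, 3 ^ γ * jb ((⌊y⌋ + j : ℤ) : ℝ) ^ (-γ) := Finset.sum_le_sum h1
    _ = 3 ^ γ * ∑ j ∈ S, jb ((⌊y⌋ + j : ℤ) : ℝ) ^ (-γ) := by rw [Finset.mul_sum]
    _ ≤ 3 ^ γ * (∑' n : ℤ, jb (n : ℝ) ^ (-γ)) := by gcongr
    _ ≤ _ := by linarith

lemma sum_lin (γ : ℝ) (hγ : 1 < γ) :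
    ∃ C : ℝ, 0 < C ∧ ∀ (y : ℝ) (d e : ℤ) (_ : d ≠ 0) (S : Finset ℤ),
      ∑ n ∈ S, jb (y + ((d * n + e : ℤ) : ℝ)) ^ (-γ) ≤ C := by
  obtain ⟨C, hC, h⟩ := sum_shift γ hγ
  refine ⟨C, hC, fun y d e hd S => ?_⟩
  have hinj : Function.Injective (fun n : ℤ => d * n + e) := by
    intro a b hab
    have : d * a = d * b := by simpa using hab
    exact mul_left_cancel₀ hd this
  have := Finset.sum_map S ⟨_, hinj⟩ (fun n : ℤ => jb (y + (n : ℝ)) ^ (-γ))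
  simp only [Function.Embedding.coeFn_mk] at this
  rw [← this]
  exact h y _

lemma sum_quad (β : ℝ) (hβ : 1 / 2 < β) :
    ∃ C : ℝ, 0 < C ∧ ∀ (k : ℤ) (τ : ℝ) (S : Finset ℤ),
      ∑ n ∈ S, jb (-τ + ((n : ℝ) + (k : ℝ)) ^ 2 + (n : ℝ) ^ 2) ^ (-β) ≤ C := by
  obtain ⟨C, hC, h⟩ := sum_lin (2 * β) (by linarith)
  refine ⟨3 ^ β * (C + C), by positivity, fun k τ S => ?_⟩
  set t := Real.sqrt (2 * τ - k ^ 2) with ht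
  have ht0 : 0 ≤ t := Real.sqrt_nonneg _
  have h1 : ∀ n ∈ S, jb (-τ + ((n : ℝ) + (k : ℝ)) ^ 2 + (n : ℝ) ^ 2) ^ (-β) ≤
      3 ^ β * (jb (-t + ((2 * n + k : ℤ) : ℝ)) ^ (-(2 * β)) +
        jb (t + ((2 * n + k : ℤ) : ℝ)) ^ (-(2 * β))) := by
    intro n _
    set A := -τ + ((n : ℝ) + (k : ℝ)) ^ 2 + (n : ℝ) ^ 2 with hA
    have hx : ((2 * n + k : ℤ) : ℝ) = 2 * n + k := by push_cast; ring
    rw [hx]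
    set x : ℝ := 2 * n + k with hxd
    have hAx : 2 * A = x ^ 2 - (2 * τ - k ^ 2) := by rw [hA, hxd]; ring
    have key : |x ^ 2 - t ^ 2| ≤ 2 * |A| := by
      rw [show 2 * |A| = |2 * A| by rw [abs_mul, abs_two], hAx]
      rcases le_total 0 (2 * τ - (k : ℝ) ^ 2) with h0 | h0
      · rw [ht, Real.sq_sqrt h0]
      · have : t = 0 := Real.sqrt_eq_zero_of_nonpos h0
        rw [this]
        rw [abs_of_nonneg (by nlinarith [sq_nonneg x]), abs_of_nonneg (by nlinarith [sq_nonneg x])]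
        linarith
    have gen : ∀ u : ℝ, u ^ 2 ≤ |x ^ 2 - t ^ 2| →
        jb A ^ (-β) ≤ 3 ^ β * jb u ^ (-(2 * β)) := by
      intro u hu
      rw [show -(2 * β) = 2 * (-β) by ring, jb_rpow_two]
      apply rpow_neg_le_aux (by positivity) (jb_pos _) (by norm_num) (by linarith)
      have := abs_le_jb A
      have := one_le_jb A
      linarith
    have p1 : 0 ≤ jb (-t + x) ^ (-(2 * β)) := Real.rpow_nonneg (jb_pos _).le _
    have p2 : 0 ≤ jb (t + x) ^ (-(2 * β)) := Real.rpow_nonneg (jb_pos _).le _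
    have p3 : (0 : ℝ) < 3 ^ β := by positivity
    rcases le_total 0 x with h0 | h0
    · have := gen (-t + x) (by
        rw [show x ^ 2 - t ^ 2 = (-t + x) * (t + x) by ring, abs_mul, ← sq_abs, sq]
        apply mul_le_mul_of_nonneg_left _ (abs_nonneg _)
        rw [abs_of_nonneg (by positivity : 0 ≤ t + x)]
        exact abs_le.mpr ⟨by linarith, by linarith⟩)
      refine this.trans ?_
      gcongr
      linarith
    · have := gen (t + x) (by
        rw [show x ^ 2 - t ^ 2 = (t + x) * (-t + x) by ring, abs_mul, ← sq_abs, sq]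
        apply mul_le_mul_of_nonneg_left _ (abs_nonneg _)
        rw [abs_of_nonpos (by linarith : -t + x ≤ 0)]
        exact abs_le.mpr ⟨by linarith, by linarith⟩)
      refine this.trans ?_
      gcongr
      linarith
  calc _ ≤ _ := Finset.sum_le_sum h1
    _ ≤ _ := by
      rw [← Finset.mul_sum, Finset.sum_add_distrib]
      gcongr
      · exact h (-t) 2 k (by norm_num) S
      · exact h t 2 k (by norm_num) S

lemma holder_aux (p δ : ℝ) (hp : 2 ≤ p) (hδ : δ < 2 / p - 1) :
    ∃ C : ℝ, 0 < C ∧ ∀ c : ℤ → ℝ, (∀ m, 0 ≤ c m) → Summable (fun m => c m ^ p) →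
      ∀ T : Finset ℤ, ∑ m ∈ T, jb (m : ℝ) ^ δ * c m ^ 2 ≤ C * (∑' m, c m ^ p) ^ (2 / p) := by
  rcases hp.eq_or_lt with rfl | hp'
  · refine ⟨1, one_pos, fun c hc hs T => ?_⟩
    norm_num at hδ
    have : ∀ m ∈ T, jb (m : ℝ) ^ δ * c m ^ 2 ≤ c m ^ (2 : ℝ) := by
      intro m _
      have := Real.rpow_le_one_of_one_le_of_nonpos (one_le_jb (m : ℝ)) hδ.le
      rw [Real.rpow_two]
      exact mul_le_of_le_one_left (sq_nonneg _) this
    calc _ ≤ ∑ m ∈ T, c m ^ (2 : ℝ) := Finset.sum_le_sum this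
      _ ≤ ∑' m, c m ^ (2 : ℝ) := hs.sum_le_tsum _ fun m _ => Real.rpow_nonneg (hc m) _
      _ = _ := by norm_num
  · have hp0 : 0 < p := by linarith
    have hp2 : 0 < p - 2 := by linarith
    set q := p / (p - 2) with hq
    have hq0 : 0 < q := by positivity
    have hconj : q.HolderConjugate (p / 2) := by
      rw [Real.holderConjugate_iff]
      constructor
      · rw [hq, lt_div_iff₀ hp2]; linarith
      · rw [hq]; field_simp; ring
    have hδq : 1 < -(δ * q) := by
      have : δ * q < (2 / p - 1) * q := by gcongr
      have e : (2 / p - 1) * q = -1 := by rw [hq]; field_simp; ring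
      linarith
    have hsum := summable_jb _ hδq
    have hK0 : 0 ≤ ∑' n : ℤ, jb (n : ℝ) ^ (-(-(δ * q))) :=
      tsum_nonneg fun n => Real.rpow_nonneg (jb_pos _).le _
    refine ⟨(∑' n : ℤ, jb (n : ℝ) ^ (-(-(δ * q)))) ^ (1 / q) + 1, by positivity,
      fun c hc hs T => ?_⟩
    have H := Real.inner_le_Lp_mul_Lq_of_nonneg T hconj
      (f := fun m : ℤ => jb (m : ℝ) ^ δ) (g := fun m => c m ^ 2)
      (fun m _ => Real.rpow_nonneg (jb_pos _).le _) (fun m _ => sq_nonneg _)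
    refine H.trans ?_
    have hS0 : 0 ≤ ∑' m, c m ^ p := tsum_nonneg fun m => Real.rpow_nonneg (hc m) _
    have e1 : ∑ m ∈ T, (jb (m : ℝ) ^ δ) ^ q ≤ ∑' n : ℤ, jb (n : ℝ) ^ (-(-(δ * q))) := by
      rw [neg_neg] at *
      simp_rw [← Real.rpow_mul (jb_pos _).le]
      exact hsum.sum_le_tsum _ fun n _ => Real.rpow_nonneg (jb_pos _).le _
    have e2 : ∑ m ∈ T, (c m ^ 2) ^ (p / 2) ≤ ∑' m, c m ^ p := by
      have : ∀ m, (c m ^ 2) ^ (p / 2) = c m ^ p := by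
        intro m
        rw [← Real.rpow_two, ← Real.rpow_mul (hc m)]
        congr 1; ring
      simp_rw [this]
      exact hs.sum_le_tsum _ fun m _ => Real.rpow_nonneg (hc m) _
    have e3 : 1 / (p / 2) = 2 / p := by field_simp
    rw [e3]
    have f1 : 0 ≤ ∑ m ∈ T, (jb (m : ℝ) ^ δ) ^ q :=
      Finset.sum_nonneg fun m _ => Real.rpow_nonneg (Real.rpow_nonneg (jb_pos _).le _) _
    have f2 : 0 ≤ ∑ m ∈ T, (c m ^ 2) ^ (p / 2) :=
      Finset.sum_nonneg fun m _ => Real.rpow_nonneg (sq_nonneg _) _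
    calc _ ≤ (∑' n : ℤ, jb (n : ℝ) ^ (-(-(δ * q)))) ^ (1 / q) * (∑' m, c m ^ p) ^ (2 / p) := by
          gcongr
      _ ≤ _ := by
          gcongr
          linarith

lemma tsum_prod_le_aux (f : ℤ × ℤ → ℝ) (hf : ∀ x, 0 ≤ f x) (M : ℝ)
    (h : ∀ S T : Finset ℤ, ∑ m ∈ T, ∑ n ∈ S, f (n, m) ≤ M) : ∑' x, f x ≤ M := by
  apply Real.tsum_le_of_sum_le hf
  intro s
  calc _ ≤ ∑ x ∈ (s.image Prod.fst) ×ˢ (s.image Prod.snd), f x := by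
        apply Finset.sum_le_sum_of_subset_of_nonneg
        · exact Finset.subset_product
        · intro x _ _; exact hf x
    _ = _ := Finset.sum_product_right _ _ _
    _ ≤ M := h _ _

/-- resonance bound -/
lemma reson (n m A B β γ : ℝ) (hβ : 0 ≤ β) (hβγ : β ≤ γ)
    (hAB : A + B = n ^ 2 + m ^ 2 + (n + m) ^ 2) :
    jb A ^ (-β) * jb B ^ (-γ) ≤
      3 ^ β * (1 + n ^ 2 + m ^ 2) ^ (-β) * (jb A ^ (-β) + jb B ^ (-γ)) := by
  have hD : 0 < 1 + n ^ 2 + m ^ 2 := by positivity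
  have a1 := abs_le_jb A
  have a2 := abs_le_jb B
  have a3 := one_le_jb A
  have a4 := one_le_jb B
  have a5 := le_abs_self A
  have a6 := le_abs_self B
  have pA : 0 ≤ jb A ^ (-β) := Real.rpow_nonneg (jb_pos _).le _
  have pB : 0 ≤ jb B ^ (-γ) := Real.rpow_nonneg (jb_pos _).le _
  have pD : 0 ≤ (1 + n ^ 2 + m ^ 2) ^ (-β) := Real.rpow_nonneg hD.le _
  have p3 : (0 : ℝ) ≤ 3 ^ β := by positivity
  rcases le_total (jb A) (jb B) with h | h
  · have e : jb B ^ (-β) ≤ 3 ^ β * (1 + n ^ 2 + m ^ 2) ^ (-β) :=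
      rpow_neg_le_aux hD (jb_pos _) (by norm_num) hβ (by nlinarith [sq_nonneg (n + m)])
    have e2 : jb B ^ (-γ) ≤ jb B ^ (-β) :=
      Real.rpow_le_rpow_of_exponent_le a4 (by linarith)
    calc _ = jb B ^ (-γ) * jb A ^ (-β) := mul_comm _ _
      _ ≤ (3 ^ β * (1 + n ^ 2 + m ^ 2) ^ (-β)) * (jb A ^ (-β) + jb B ^ (-γ)) := by
        apply mul_le_mul (e2.trans e) (by linarith) pA (by positivity)
  · have e : jb A ^ (-β) ≤ 3 ^ β * (1 + n ^ 2 + m ^ 2) ^ (-β) :=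
      rpow_neg_le_aux hD (jb_pos _) (by norm_num) hβ (by nlinarith [sq_nonneg (n + m)])
    apply mul_le_mul e (by linarith) pB (by positivity)

/-- weight bound, `σ = -s`, `σ₀ = -s₀` -/
lemma weight (n m s β : ℝ) (hs : s ≤ 0) (hs2 : -(1 / 2) < s) :
    jb (n + m) ^ (-(2 * s)) * (1 + n ^ 2 + m ^ 2) ^ (-β) ≤
      2 * (1 + n ^ 2 + m ^ 2) ^ (-s - β) := by
  have hD : 0 < 1 + n ^ 2 + m ^ 2 := by positivity
  rw [sub_eq_add_neg, Real.rpow_add hD, ← mul_assoc]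
  gcongr
  rw [show -(2 * s) = 2 * (-s) by ring, jb_rpow_two]
  calc (1 + (n + m) ^ 2) ^ (-s) ≤ (2 * (1 + n ^ 2 + m ^ 2)) ^ (-s) := by
        apply Real.rpow_le_rpow (by positivity) _ (by linarith)
        nlinarith [sq_nonneg (n - m)]
    _ = 2 ^ (-s) * (1 + n ^ 2 + m ^ 2) ^ (-s) := Real.mul_rpow (by norm_num) hD.le
    _ ≤ 2 * _ := by
        gcongr
        calc (2 : ℝ) ^ (-s) ≤ 2 ^ (1 : ℝ) :=
              Real.rpow_le_rpow_of_exponent_le (by norm_num) (by linarith)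
          _ = 2 := by norm_num

lemma weight1 (n m s s₀ β : ℝ) (hs : s ≤ 0) (hs2 : -(1 / 2) < s) (hβ : 1 / 2 < β) :
    jb n ^ (2 * s) * jb (n + m) ^ (-(2 * s)) * jb m ^ (-(2 * s₀)) *
      (1 + n ^ 2 + m ^ 2) ^ (-β) ≤ 2 * jb m ^ (-2 * s - 2 * s₀ - 2 * β) := by
  have hD : 0 < 1 + n ^ 2 + m ^ 2 := by positivity
  have w := weight n m s β hs hs2
  have h1 : jb n ^ (2 * s) ≤ 1 :=
    Real.rpow_le_one_of_one_le_of_nonpos (one_le_jb n) (by linarith)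
  have h1' : 0 ≤ jb n ^ (2 * s) := Real.rpow_nonneg (jb_pos _).le _
  have h2 : (1 + n ^ 2 + m ^ 2) ^ (-s - β) ≤ jb m ^ (2 * (-s - β)) := by
    rw [jb_rpow_two]
    exact Real.rpow_le_rpow_of_nonpos (by positivity) (by nlinarith [sq_nonneg n]) (by linarith)
  have h3 : 0 ≤ jb m ^ (-(2 * s₀)) := Real.rpow_nonneg (jb_pos _).le _
  have h4 : 0 ≤ jb (n + m) ^ (-(2 * s)) * (1 + n ^ 2 + m ^ 2) ^ (-β) :=
    mul_nonneg (Real.rpow_nonneg (jb_pos _).le _) (Real.rpow_nonneg hD.le _)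
  rw [show -2 * s - 2 * s₀ - 2 * β = -(2 * s₀) + 2 * (-s - β) by ring, Real.rpow_add (jb_pos _)]
  calc _ = jb n ^ (2 * s) * jb m ^ (-(2 * s₀)) *
          (jb (n + m) ^ (-(2 * s)) * (1 + n ^ 2 + m ^ 2) ^ (-β)) := by ring
    _ ≤ 1 * jb m ^ (-(2 * s₀)) * (2 * jb m ^ (2 * (-s - β))) := by
        apply mul_le_mul _ (w.trans (by gcongr)) h4 (by positivity)
        gcongr
    _ = _ := by ring

lemma weight2 (n m s s₀ β : ℝ) (hs : s ≤ 0) (hs2 : -(1 / 2) < s) (hs₀ : s₀ ≤ 0)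
    (hβ : -s - s₀ ≤ β) :
    jb n ^ (2 * s) * jb (n + m) ^ (-(2 * s)) * jb m ^ (-(2 * s₀)) *
      (1 + n ^ 2 + m ^ 2) ^ (-β) ≤ 2 * jb n ^ (-(2 * s₀ + 2 * β)) := by
  have hD : 0 < 1 + n ^ 2 + m ^ 2 := by positivity
  have w := weight n m s β hs hs2
  have h1' : 0 ≤ jb n ^ (2 * s) := Real.rpow_nonneg (jb_pos _).le _
  have h3 : jb m ^ (-(2 * s₀)) ≤ (1 + n ^ 2 + m ^ 2) ^ (-s₀) := by
    rw [show -(2 * s₀) = 2 * (-s₀) by ring, jb_rpow_two]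
    exact Real.rpow_le_rpow (by positivity) (by nlinarith [sq_nonneg n]) (by linarith)
  have h2 : (1 + n ^ 2 + m ^ 2) ^ (-s₀) * (1 + n ^ 2 + m ^ 2) ^ (-s - β) ≤
      jb n ^ (2 * (-s₀ + (-s - β))) := by
    rw [← Real.rpow_add hD, jb_rpow_two]
    exact Real.rpow_le_rpow_of_nonpos (by positivity) (by nlinarith [sq_nonneg m]) (by linarith)
  have h4 : 0 ≤ jb (n + m) ^ (-(2 * s)) * (1 + n ^ 2 + m ^ 2) ^ (-β) :=
    mul_nonneg (Real.rpow_nonneg (jb_pos _).le _) (Real.rpow_nonneg hD.le _)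
  rw [show -(2 * s₀ + 2 * β) = 2 * s + 2 * (-s₀ + (-s - β)) by ring, Real.rpow_add (jb_pos _)]
  calc _ = jb n ^ (2 * s) * (jb m ^ (-(2 * s₀)) *
          (jb (n + m) ^ (-(2 * s)) * (1 + n ^ 2 + m ^ 2) ^ (-β))) := by ring
    _ ≤ jb n ^ (2 * s) * ((1 + n ^ 2 + m ^ 2) ^ (-s₀) * (2 * (1 + n ^ 2 + m ^ 2) ^ (-s - β))) := by
        gcongr
    _ = 2 * (jb n ^ (2 * s) *
          ((1 + n ^ 2 + m ^ 2) ^ (-s₀) * (1 + n ^ 2 + m ^ 2) ^ (-s - β))) := by ring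
    _ ≤ _ := by gcongr

/-- the core uniform bound in the bilinear estimate.  For `-1/2 < s₀ ≤ 0`,
real `p ≥ 2`, and `max(-1/2, -1/6 - s₀ - 1/p) < s ≤ 0`, there is `b₂ > 1/2` such that for
all `1/2 < b < b₂` there is `C > 0` with, for every `a : ℤ → ℂ` with
`∑_m ⟨m⟩^{s₀ p} |a_m|^p < ∞`, every `k ∈ ℤ` and `τ ∈ ℝ`,
`∑_{(n,m)} ⟨n⟩^{2s} ⟨n+m⟩^{-2s} |a_m|² ⟨-τ+(n+k)²+n²⟩^{-2(1-b)} ⟨τ-(n+k)²+m²+(n+m)²⟩^{-2b}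
  ≤ C (∑_m ⟨m⟩^{s₀ p} |a_m|^p)^{2/p}`. -/
theorem stmt2 (s₀ p s : ℝ) (hs₀l : -(1 / 2) < s₀) (hs₀u : s₀ ≤ 0) (hp : 2 ≤ p)
    (hsl : max (-(1 / 2)) (-(1 / 6) - s₀ - 1 / p) < s) (hsu : s ≤ 0) :
    ∃ b₂ : ℝ, 1 / 2 < b₂ ∧ ∀ b : ℝ, 1 / 2 < b → b < b₂ →
      ∃ C : ℝ, 0 < C ∧ ∀ a : ℤ → ℂ,
        Summable (fun m : ℤ => jb (m : ℝ) ^ (s₀ * p) * ‖a m‖ ^ p) →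
        ∀ (k : ℤ) (τ : ℝ),
          (∑' nm : ℤ × ℤ,
              jb (nm.1 : ℝ) ^ (2 * s) * jb ((nm.1 : ℝ) + (nm.2 : ℝ)) ^ (-(2 * s)) *
                ‖a nm.2‖ ^ 2 *
                jb (-τ + ((nm.1 : ℝ) + (k : ℝ)) ^ 2 + (nm.1 : ℝ) ^ 2) ^ (-(2 * (1 - b))) *
                jb (τ - ((nm.1 : ℝ) + (k : ℝ)) ^ 2 + (nm.2 : ℝ) ^ 2 +
                    ((nm.1 : ℝ) + (nm.2 : ℝ)) ^ 2) ^ (-(2 * b)))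
            ≤ C * (∑' m : ℤ, jb (m : ℝ) ^ (s₀ * p) * ‖a m‖ ^ p) ^ (2 / p) := by
  have hsl1 : -(1 / 2) < s := lt_of_le_of_lt (le_max_left _ _) hsl
  have hsl2 : -(1 / 6) - s₀ - 1 / p < s := lt_of_le_of_lt (le_max_right _ _) hsl
  have hp0 : 0 < p := by linarith
  have hpinv : 1 / p ≤ 1 / 2 := one_div_le_one_div_of_le (by norm_num) hp
  refine ⟨min (2 / 3) (3 / 4 + s₀ / 2), lt_min (by norm_num) (by linarith), fun b hb1 hb2 => ?_⟩
  have hb3 : b < 2 / 3 := lt_of_lt_of_le hb2 (min_le_left _ _)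
  have hb4 : b < 3 / 4 + s₀ / 2 := lt_of_lt_of_le hb2 (min_le_right _ _)
  set β := 2 * (1 - b) with hβ
  have hβ1 : 2 / 3 < β := by linarith
  have hδ : -2 * s - 2 * s₀ - 2 * β < 2 / p - 1 := by
    have : 2 / p = 2 * (1 / p) := by ring
    linarith
  obtain ⟨C1, hC1, H1⟩ := sum_quad β (by linarith)
  obtain ⟨C2, hC2, H2⟩ := sum_lin (2 * b) (by linarith)
  obtain ⟨C3, hC3, H3⟩ := sum_shift (2 * s₀ + 2 * β) (by linarith)
  obtain ⟨C4, hC4, H4⟩ := holder_aux p _ hp hδ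
  have p3 : (0 : ℝ) < 3 ^ β := by positivity
  refine ⟨3 ^ β * 2 * ((C1 + C2) * C4 + C3), by positivity, fun a ha k τ => ?_⟩
  set c : ℤ → ℝ := fun m => jb (m : ℝ) ^ s₀ * ‖a m‖ with hc
  have hc0 : ∀ m, 0 ≤ c m := fun m =>
    mul_nonneg (Real.rpow_nonneg (jb_pos _).le _) (norm_nonneg _)
  have hcp : ∀ m : ℤ, jb (m : ℝ) ^ (s₀ * p) * ‖a m‖ ^ p = c m ^ p := by
    intro m
    rw [hc, Real.mul_rpow (Real.rpow_nonneg (jb_pos _).le _) (norm_nonneg _),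
      ← Real.rpow_mul (jb_pos _).le]
  have hca : ∀ m : ℤ, ‖a m‖ ^ 2 = jb (m : ℝ) ^ (-(2 * s₀)) * c m ^ 2 := by
    intro m
    simp only [hc]
    rw [mul_pow, ← mul_assoc, ← Real.rpow_two (jb (m : ℝ) ^ s₀), ← Real.rpow_mul (jb_pos _).le,
      ← Real.rpow_add (jb_pos _)]
    rw [show -(2 * s₀) + s₀ * 2 = 0 by ring, Real.rpow_zero, one_mul]
  simp_rw [hcp] at ha ⊢
  have hck : c k ^ 2 ≤ (∑' m, c m ^ p) ^ (2 / p) := by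
    have h1 : c k ^ p ≤ ∑' m, c m ^ p :=
      ha.le_tsum k fun m _ => Real.rpow_nonneg (hc0 m) _
    have h2 := Real.rpow_le_rpow (Real.rpow_nonneg (hc0 k) _) h1 (by positivity : 0 ≤ 2 / p)
    rw [← Real.rpow_mul (hc0 k), show p * (2 / p) = 2 by field_simp, Real.rpow_two] at h2
    exact h2
  have hN : 0 ≤ (∑' m, c m ^ p) ^ (2 / p) := (sq_nonneg _).trans hck
  apply tsum_prod_le_aux
  · intro x
    have := fun y r => Real.rpow_nonneg (jb_pos y).le r
    have h1 := this (x.1 : ℝ) (2 * s)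
    have h2 := this ((x.1 : ℝ) + x.2) (-(2 * s))
    exact mul_nonneg (mul_nonneg (mul_nonneg (mul_nonneg h1 h2) (sq_nonneg _)) (this _ _))
      (this _ _)
  intro S T
  -- pointwise bounds
  set δ := -2 * s - 2 * s₀ - 2 * β with hδd
  have hpt : ∀ m ∈ T, ∑ n ∈ S, (jb (n : ℝ) ^ (2 * s) * jb ((n : ℝ) + (m : ℝ)) ^ (-(2 * s)) *
      ‖a m‖ ^ 2 * jb (-τ + ((n : ℝ) + (k : ℝ)) ^ 2 + (n : ℝ) ^ 2) ^ (-β) *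
      jb (τ - ((n : ℝ) + (k : ℝ)) ^ 2 + (m : ℝ) ^ 2 + ((n : ℝ) + (m : ℝ)) ^ 2) ^ (-(2 * b))) ≤
      3 ^ β * 2 * ((C1 + C2) * (jb (m : ℝ) ^ δ * c m ^ 2) +
        if m = k then C3 * c k ^ 2 else 0) := by
    intro m _
    set W : ℤ → ℝ := fun n => jb (n : ℝ) ^ (2 * s) * jb ((n : ℝ) + (m : ℝ)) ^ (-(2 * s)) *
      jb (m : ℝ) ^ (-(2 * s₀)) * (1 + (n : ℝ) ^ 2 + (m : ℝ) ^ 2) ^ (-β) with hW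
    set A : ℤ → ℝ := fun n => -τ + ((n : ℝ) + (k : ℝ)) ^ 2 + (n : ℝ) ^ 2 with hA
    set B : ℤ → ℝ := fun n => τ - ((n : ℝ) + (k : ℝ)) ^ 2 + (m : ℝ) ^ 2 +
      ((n : ℝ) + (m : ℝ)) ^ 2 with hB
    have hjm : 0 ≤ jb (m : ℝ) ^ δ := Real.rpow_nonneg (jb_pos _).le _
    have hA0 : ∀ n, 0 ≤ jb (A n) ^ (-β) := fun n => Real.rpow_nonneg (jb_pos _).le _
    have hB0 : ∀ n, 0 ≤ jb (B n) ^ (-(2 * b)) := fun n => Real.rpow_nonneg (jb_pos _).le _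
    have hB1 : ∀ n, jb (B n) ^ (-(2 * b)) ≤ 1 := fun n =>
      Real.rpow_le_one_of_one_le_of_nonpos (one_le_jb _) (by linarith)
    have hW1 : ∀ n : ℤ, W n ≤ 2 * jb (m : ℝ) ^ δ := fun n =>
      weight1 n m s s₀ β hsu hsl1 (by linarith)
    have hW2 : ∀ n : ℤ, W n ≤ 2 * jb (n : ℝ) ^ (-(2 * s₀ + 2 * β)) := fun n =>
      weight2 n m s s₀ β hsu hsl1 hs₀u (by linarith)
    have hW0 : ∀ n, 0 ≤ W n := by
      intro n
      have := fun y r => Real.rpow_nonneg (jb_pos y).le r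
      exact mul_nonneg (mul_nonneg (mul_nonneg (this _ _) (this _ _)) (this _ _))
        (Real.rpow_nonneg (by positivity) _)
    have step1 : ∀ n ∈ S, (jb (n : ℝ) ^ (2 * s) * jb ((n : ℝ) + (m : ℝ)) ^ (-(2 * s)) *
        ‖a m‖ ^ 2 * jb (A n) ^ (-β) * jb (B n) ^ (-(2 * b))) ≤
        3 ^ β * c m ^ 2 * (W n * jb (A n) ^ (-β) + W n * jb (B n) ^ (-(2 * b))) := by
      intro n _
      have r := reson n m (A n) (B n) β (2 * b) (by linarith) (by linarith)
        (by simp only [hA, hB]; ring)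
      rw [hca m]
      have h0 : 0 ≤ jb (n : ℝ) ^ (2 * s) * jb ((n : ℝ) + (m : ℝ)) ^ (-(2 * s)) *
          (jb (m : ℝ) ^ (-(2 * s₀)) * c m ^ 2) := by
        have := fun y r => Real.rpow_nonneg (jb_pos y).le r
        exact mul_nonneg (mul_nonneg (this _ _) (this _ _)) (mul_nonneg (this _ _) (sq_nonneg _))
      have := mul_le_mul_of_nonneg_left r h0
      calc _ = _ := mul_assoc _ _ _
        _ ≤ _ := this
        _ = _ := by simp only [hW]; ring
    have sA : ∑ n ∈ S, W n * jb (A n) ^ (-β) ≤ 2 * jb (m : ℝ) ^ δ * C1 := by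
      calc _ ≤ ∑ n ∈ S, 2 * jb (m : ℝ) ^ δ * jb (A n) ^ (-β) :=
            Finset.sum_le_sum fun n _ => mul_le_mul_of_nonneg_right (hW1 n) (hA0 n)
        _ = 2 * jb (m : ℝ) ^ δ * ∑ n ∈ S, jb (A n) ^ (-β) := by rw [Finset.mul_sum]
        _ ≤ _ := mul_le_mul_of_nonneg_left (H1 k τ S) (by positivity)
    have sB : ∑ n ∈ S, W n * jb (B n) ^ (-(2 * b)) ≤
        2 * (jb (m : ℝ) ^ δ * C2 + if m = k then C3 else 0) := by
      by_cases hmk : m = k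
      · rw [if_pos hmk]
        have : ∑ n ∈ S, W n * jb (B n) ^ (-(2 * b)) ≤ 2 * C3 := by
          calc _ ≤ ∑ n ∈ S, 2 * jb (0 + (n : ℝ)) ^ (-(2 * s₀ + 2 * β)) := by
                apply Finset.sum_le_sum fun n _ => ?_
                rw [zero_add]
                exact (mul_le_of_le_one_right (hW0 n) (hB1 n)).trans (hW2 n)
            _ = 2 * ∑ n ∈ S, jb (0 + (n : ℝ)) ^ (-(2 * s₀ + 2 * β)) := by rw [Finset.mul_sum]
            _ ≤ _ := mul_le_mul_of_nonneg_left (H3 0 S) (by norm_num)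
        have := mul_nonneg hjm hC2.le
        linarith
      · rw [if_neg hmk, add_zero]
        have hd : 2 * (m - k) ≠ 0 := by
          have := sub_ne_zero.mpr hmk
          positivity
        have hBe : ∀ n, B n = (2 * (m : ℝ) ^ 2 + τ - k ^ 2) + ((2 * (m - k) * n + 0 : ℤ) : ℝ) := by
          intro n; simp only [hB]; push_cast; ring
        calc _ ≤ ∑ n ∈ S, 2 * jb (m : ℝ) ^ δ * jb (B n) ^ (-(2 * b)) :=
              Finset.sum_le_sum fun n _ => mul_le_mul_of_nonneg_right (hW1 n) (hB0 n)
          _ = 2 * jb (m : ℝ) ^ δ * ∑ n ∈ S, jb (B n) ^ (-(2 * b)) := by rw [Finset.mul_sum]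
          _ ≤ 2 * jb (m : ℝ) ^ δ * C2 := by
              apply mul_le_mul_of_nonneg_left _ (by positivity)
              simp_rw [hBe]
              exact H2 _ _ _ hd S
          _ = _ := by ring
    calc _ ≤ ∑ n ∈ S, 3 ^ β * c m ^ 2 * (W n * jb (A n) ^ (-β) + W n * jb (B n) ^ (-(2 * b))) :=
          Finset.sum_le_sum step1
      _ = 3 ^ β * c m ^ 2 * (∑ n ∈ S, W n * jb (A n) ^ (-β) +
            ∑ n ∈ S, W n * jb (B n) ^ (-(2 * b))) := by
          rw [← Finset.mul_sum, Finset.sum_add_distrib]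
      _ ≤ 3 ^ β * c m ^ 2 * (2 * jb (m : ℝ) ^ δ * C1 +
            2 * (jb (m : ℝ) ^ δ * C2 + if m = k then C3 else 0)) := by
          apply mul_le_mul_of_nonneg_left (add_le_add sA sB) (by positivity)
      _ = _ := by
          split_ifs with hmk
          · rw [hmk]; ring
          · ring
  refine (Finset.sum_le_sum hpt).trans ?_
  rw [← Finset.mul_sum, Finset.sum_add_distrib, ← Finset.mul_sum,
    mul_assoc (3 ^ β * 2) ((C1 + C2) * C4 + C3)]
  apply mul_le_mul_of_nonneg_left _ (by positivity)
  rw [add_mul ((C1 + C2) * C4) C3]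
  apply add_le_add
  · rw [mul_assoc]
    exact mul_le_mul_of_nonneg_left (H4 c hc0 ha T) (by positivity)
  · rw [Finset.sum_ite_eq']
    split_ifs
    · exact mul_le_mul_of_nonneg_left hck hC3.le
    · positivity
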